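/- arXiv:2002.08824 — 2 statements merged into one kernel-verified Lean document; each statement's English description precedes it below -/
import Mathlib

section
/- Let M be a matroid on a finite ground set E, let 1 ≤ l ≤ |E| − r(E), let ρ ∈ N_{l−1} (where N_0 = {∅}) and μ ∈ N_l. Then ρ ⊆ μ if and only if there exists a circuit τ of M such that μ = ρ ∪ τ. -/
open Finset

/-- A matroid on ground set `Fin n`, given by its rank function. -/
structure MatroidRk (n : ℕ) where
  r : Finset (Fin n) → ℕ
  r_le_card : ∀ X, r X ≤ X.card
  r_mono : ∀ ⦃X Y : Finset (Fin n)⦄, X ⊆ Y → r X ≤ r Y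
  r_submod : ∀ X Y, r (X ∩ Y) + r (X ∪ Y) ≤ r X + r Y

namespace MatroidRk

variable {n : ℕ}

/-- The nullity function `n(X) = |X| - r(X)`. -/
def nul (M : MatroidRk n) (X : Finset (Fin n)) : ℕ := X.card - M.r X

/-- `X ∈ N_i`: `X` is inclusion-minimal among the subsets of nullity `i`. -/
def Nmin (M : MatroidRk n) (i : ℕ) (X : Finset (Fin n)) : Prop :=
  M.nul X = i ∧ ∀ Y ⊆ X, M.nul Y = i → Y = X

/-- Membership in `Σ`: a chain `σ₁ ⊊ ⋯ ⊊ σ_k` with `σ_i ∈ 𝒩_i`. -/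
def SigmaChain (M : MatroidRk n) (k : ℕ) (σ : Fin k → Finset (Fin n)) : Prop :=
  StrictMono σ ∧ ∀ i : Fin k, M.nul (σ i) = (i : ℕ) + 1

/-- Membership in `Σ'`: a chain `σ₁ ⊊ ⋯ ⊊ σ_k` with `σ_i ∈ N_i`. -/
def SigmaChain' (M : MatroidRk n) (k : ℕ) (σ : Fin k → Finset (Fin n)) : Prop :=
  StrictMono σ ∧ ∀ i : Fin k, M.Nmin ((i : ℕ) + 1) (σ i)

/-- The set `{e(S) : S ∈ Σ}` of tuples of cardinalities of chains in `Σ`. -/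
def eSet (M : MatroidRk n) (k : ℕ) : Set (Fin k → ℕ) :=
  {u | ∃ σ : Fin k → Finset (Fin n), M.SigmaChain k σ ∧ ∀ i, (σ i).card = u i}

/-- The set `{e(S) : S ∈ Σ'}`. -/
def eSet' (M : MatroidRk n) (k : ℕ) : Set (Fin k → ℕ) :=
  {u | ∃ σ : Fin k → Finset (Fin n), M.SigmaChain' k σ ∧ ∀ i, (σ i).card = u i}

/-- The generalized Hamming weight `d_i = min {|σ| : σ ∈ 𝒩_i}`. -/
noncomputable def dW (M : MatroidRk n) (i : ℕ) : ℕ :=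
  sInf {c | ∃ X, M.nul X = i ∧ X.card = c}

end MatroidRk

/-- `w` is the lexicographically smallest element of `A`. -/
def IsLexMin {k : ℕ} (A : Set (Fin k → ℕ)) (w : Fin k → ℕ) : Prop :=
  w ∈ A ∧ ∀ u ∈ A, toLex w ≤ toLex u

/-- `w` is the reverse-lexicographically smallest element of `A`. -/
def IsRevLexMin {k : ℕ} (A : Set (Fin k → ℕ)) (w : Fin k → ℕ) : Prop :=
  w ∈ A ∧ ∀ u ∈ A, toLex (w ∘ Fin.rev) ≤ toLex (u ∘ Fin.rev)

namespace MatroidRk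

/-- A circuit: an inclusion-minimal dependent set. -/
def Circuit {n : ℕ} (M : MatroidRk n) (X : Finset (Fin n)) : Prop :=
  M.nul X ≠ 0 ∧ ∀ Y ⊂ X, M.nul Y = 0

end MatroidRk

namespace MatroidRk

theorem nul_add {n : ℕ} (M : MatroidRk n) (X : Finset (Fin n)) : M.nul X + M.r X = X.card := by
  have := M.r_le_card X
  unfold nul
  omega

theorem nul_super {n : ℕ} (M : MatroidRk n) (X Y : Finset (Fin n)) :
    M.nul X + M.nul Y ≤ M.nul (X ∩ Y) + M.nul (X ∪ Y) := by
  have h1 := M.nul_add X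
  have h2 := M.nul_add Y
  have h3 := M.nul_add (X ∩ Y)
  have h4 := M.nul_add (X ∪ Y)
  have h5 := M.r_submod X Y
  have h6 := Finset.card_union_add_card_inter X Y
  omega

theorem nul_empty {n : ℕ} (M : MatroidRk n) : M.nul ∅ = 0 := by
  simp [nul]

theorem nul_mono {n : ℕ} (M : MatroidRk n) {X Y : Finset (Fin n)} (h : X ⊆ Y) : M.nul X ≤ M.nul Y := by
  have h1 := M.nul_super X (Y \ X)
  rw [Finset.inter_sdiff_self, nul_empty, Finset.union_sdiff_of_subset h] at h1
  omega

theorem nul_erase {n : ℕ} (M : MatroidRk n) {X : Finset (Fin n)} {x : Fin n} (h : x ∈ X) :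
    M.nul X ≤ M.nul (X.erase x) + 1 := by
  have h1 := M.nul_add X
  have h2 := M.nul_add (X.erase x)
  have h3 := M.r_mono (Finset.erase_subset x X)
  have h4 := Finset.card_erase_add_one h
  omega

theorem nul_zero_of_erase {n : ℕ} (M : MatroidRk n) {Z : Finset (Fin n)}
    (h : ∀ y ∈ Z, M.nul (Z.erase y) = M.nul Z) : M.nul Z = 0 := by
  have key : ∀ S : Finset (Fin n), S ⊆ Z → M.nul (Z \ S) = M.nul Z := by
    intro S
    induction S using Finset.induction_on with
    | empty => simp
    | insert a S ha ih =>
      intro hS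
      have haZ : a ∈ Z := hS (Finset.mem_insert_self a S)
      have h1 := ih ((Finset.subset_insert a S).trans hS)
      have h2 := h a haZ
      have h3 := M.nul_super (Z \ S) (Z.erase a)
      have e1 : (Z \ S) ∩ Z.erase a = Z \ insert a S := by
        ext b; simp; tauto
      rw [e1] at h3
      have h4 := M.nul_mono (X := (Z \ S) ∪ Z.erase a) (Y := Z)
        (Finset.union_subset Finset.sdiff_subset (Finset.erase_subset _ _))
      have h5 := M.nul_mono (X := Z \ insert a S) (Y := Z) Finset.sdiff_subset
      omega
  have := key Z (Finset.Subset.refl _)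
  rw [Finset.sdiff_self, nul_empty] at this
  exact this.symm

theorem exists_circuit {n : ℕ} (M : MatroidRk n) (C : Finset (Fin n)) (x : Fin n) (hx : x ∈ C)
    (hC : M.nul (C.erase x) < M.nul C) : ∃ τ, M.Circuit τ ∧ τ ⊆ C ∧ x ∈ τ := by
  induction C using Finset.strongInduction with
  | H C ih =>
    by_cases hy : ∃ y ∈ C.erase x, M.nul ((C.erase y).erase x) < M.nul (C.erase y)
    · obtain ⟨y, hy, hlt⟩ := hy
      rw [Finset.mem_erase] at hy
      obtain ⟨τ, h1, h2, h3⟩ := ih (C.erase y) (Finset.erase_ssubset hy.2)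
        (Finset.mem_erase.2 ⟨hy.1.symm, hx⟩) hlt
      exact ⟨τ, h1, h2.trans (Finset.erase_subset _ _), h3⟩
    · push Not at hy
      have hex := M.nul_erase hx
      have hZ : M.nul (C.erase x) = 0 := by
        apply M.nul_zero_of_erase
        intro y hyC
        have h1 := hy y hyC
        rw [Finset.erase_right_comm] at h1
        have h2 := M.nul_mono (Finset.erase_subset y (C.erase x))
        have h3 := M.nul_erase (Finset.mem_of_mem_erase hyC)
        omega
      refine ⟨C, ⟨by omega, ?_⟩, Finset.Subset.refl _, hx⟩
      intro Y hY
      obtain ⟨y, hyC, hyY⟩ := Finset.exists_of_ssubset hY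
      have hYs : Y ⊆ C.erase y := Finset.subset_erase.2 ⟨hY.1, hyY⟩
      have h0 := M.nul_mono hYs
      by_cases hxy : y = x
      · subst hxy; omega
      · have h1 := hy y (Finset.mem_erase.2 ⟨hxy, hyC⟩)
        have h2 := M.nul_mono (X := (C.erase y).erase x) (Y := C.erase x)
          (Finset.erase_subset_erase _ (Finset.erase_subset _ _))
        omega

end MatroidRk

open MatroidRk in
/-- for `1 ≤ l ≤ |E| - r(E)`, `ρ ∈ N_{l-1}` and `μ ∈ N_l`, one has `ρ ⊆ μ` if
and only if `μ = ρ ∪ τ` for some circuit `τ` of `M`. (Here `N_0 = {∅}`, which is exactly the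
set of inclusion-minimal subsets of nullity `0`.) -/
theorem statement18 {n : ℕ} (M : MatroidRk n) (l : ℕ) (hl1 : 1 ≤ l)
    (hl : l ≤ n - M.r Finset.univ)
    (ρ μ : Finset (Fin n)) (hρ : M.Nmin (l - 1) ρ) (hμ : M.Nmin l μ) :
    ρ ⊆ μ ↔ ∃ τ : Finset (Fin n), M.Circuit τ ∧ μ = ρ ∪ τ := by
  constructor
  · intro hsub
    obtain ⟨hρ1, -⟩ := hρ
    obtain ⟨hμ1, hμ2⟩ := hμ
    have hss : ρ ⊂ μ := by
      refine Finset.ssubset_iff_subset_ne.2 ⟨hsub, ?_⟩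
      rintro rfl
      omega
    obtain ⟨x, hxμ, hxρ⟩ := Finset.exists_of_ssubset hss
    have hlt : M.nul (μ.erase x) < M.nul μ := by
      refine lt_of_le_of_ne (M.nul_mono (Finset.erase_subset _ _)) ?_
      intro he
      have := hμ2 _ (Finset.erase_subset x μ) (he.trans hμ1)
      exact (Finset.erase_ne_self.2 hxμ) this
    obtain ⟨τ, hτ, hτμ, hxτ⟩ := M.exists_circuit μ x hxμ hlt
    refine ⟨τ, hτ, ?_⟩
    have hu : ρ ∪ τ ⊆ μ := Finset.union_subset hsub hτμ
    refine (hμ2 _ hu ?_).symm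
    have h1 := M.nul_super ρ τ
    have h2 : M.nul (ρ ∩ τ) = 0 := by
      apply hτ.2
      refine Finset.ssubset_iff_subset_ne.2 ⟨Finset.inter_subset_right, ?_⟩
      intro he
      rw [← he] at hxτ
      exact hxρ (Finset.mem_inter.1 hxτ).1
    have h3 := M.nul_mono hu
    have h4 := hτ.1
    omega
  · rintro ⟨τ, -, rfl⟩
    exact Finset.subset_union_left
end

section
/- Let M be a matroid of rank n−k on a ground set E of cardinality n. Suppose that for every 1 ≤ i ≤ k, all elements of N_i have the same cardinality (this hypothesis is equivalent to the Stanley–Reisner ring of the independence complex of M having a pure minimal free resolution). Then M is chained. -/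
open Finset

namespace MatroidRk

/-- A matroid (of rank `n-k`) is chained if there is a chain `σ_1 ⊆ ⋯ ⊆ σ_k` with
`σ_i ∈ N_i` and `|σ_i| = d_i` for every `i`. -/
def Chained {n : ℕ} (M : MatroidRk n) (k : ℕ) : Prop :=
  ∃ σ : Fin k → Finset (Fin n), Monotone σ ∧
    ∀ i : Fin k, M.Nmin ((i : ℕ) + 1) (σ i) ∧ (σ i).card = M.dW ((i : ℕ) + 1)

/-- The CEZ greedy weights of a matroid: `g_1 = d_1` and for `i ≥ 2`,
`g_i = min {|σ| : σ ∈ 𝒩_i, ∃ τ ∈ 𝒩_{i-1}, τ ⊆ σ, |τ| = d_{i-1}}`. -/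
noncomputable def gW {n : ℕ} (M : MatroidRk n) (i : ℕ) : ℕ :=
  if i ≤ 1 then M.dW 1
  else sInf {c | ∃ X, M.nul X = i ∧
    (∃ Y, M.nul Y = i - 1 ∧ Y ⊆ X ∧ Y.card = M.dW (i - 1)) ∧ X.card = c}

end MatroidRk

namespace MatroidRk

theorem exists_sub_nul {n : ℕ} (M : MatroidRk n) (j : ℕ) (X : Finset (Fin n)) :
    j ≤ M.nul X → ∃ Y ⊆ X, M.nul Y = j := by
  induction X using Finset.strongInduction with
  | H X ih =>
    intro h
    rcases h.eq_or_lt with h1 | h1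
    · exact ⟨X, Finset.Subset.refl _, h1.symm⟩
    · have hne : X.Nonempty := by
        rw [Finset.nonempty_iff_ne_empty]
        rintro rfl
        simp [nul] at h1
      obtain ⟨a, ha⟩ := hne
      have hle : j ≤ M.nul (X.erase a) := by
        have h2 := M.r_mono (Finset.erase_subset a X)
        have h3 := Finset.card_erase_add_one ha
        unfold nul at *
        omega
      obtain ⟨Y, hY, hj⟩ := ih _ (Finset.erase_ssubset ha) hle
      exact ⟨Y, hY.trans (Finset.erase_subset a X), hj⟩

theorem exists_sub_nmin {n : ℕ} (M : MatroidRk n) (X : Finset (Fin n)) :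
    ∃ Y ⊆ X, M.Nmin (M.nul X) Y := by
  obtain ⟨Y, hY, hmin⟩ := Finset.exists_min_image
    (X.powerset.filter fun Y => M.nul Y = M.nul X) Finset.card ⟨X, by simp⟩
  simp only [Finset.mem_filter, Finset.mem_powerset] at hY hmin
  exact ⟨Y, hY.1, hY.2, fun Z hZ h =>
    Finset.eq_of_subset_of_card_le hZ (hmin Z ⟨hZ.trans hY.1, h⟩)⟩

theorem exists_chain {n : ℕ} (M : MatroidRk n) (m : ℕ) : ∀ X : Finset (Fin n), M.nul X = m →
    ∃ σ : ℕ → Finset (Fin n), Monotone σ ∧ (∀ i, σ i ⊆ X) ∧ ∀ i ≤ m, M.Nmin i (σ i) := by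
  induction m with
  | zero =>
    intro X hX
    obtain ⟨Y, hY, h⟩ := M.exists_sub_nmin X
    rw [hX] at h
    refine ⟨fun _ => Y, monotone_const, fun _ => hY, fun i hi => ?_⟩
    obtain rfl : i = 0 := by omega
    exact h
  | succ m ih =>
    intro X hX
    obtain ⟨Y, hY, h⟩ := M.exists_sub_nmin X
    rw [hX] at h
    obtain ⟨Z, hZ, hm⟩ := M.exists_sub_nul m Y (by rw [h.1]; omega)
    obtain ⟨σ, hmono, hsub, hN⟩ := ih Z hm
    refine ⟨fun i => if i ≤ m then σ i else Y, ?_, ?_, ?_⟩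
    · intro a b hab
      dsimp only
      split_ifs with h1 h2
      · exact hmono hab
      · exact (hsub a).trans hZ
      · omega
      · exact le_rfl
    · intro i
      dsimp only
      split_ifs
      · exact ((hsub i).trans hZ).trans hY
      · exact hY
    · intro i hi
      dsimp only
      split_ifs with h1
      · exact hN i h1
      · obtain rfl : i = m + 1 := by omega
        exact h

end MatroidRk

open MatroidRk in
/-- if for every `1 ≤ i ≤ k` all elements of `N_i` have the same cardinality
(equivalently, the Stanley–Reisner ring of the independence complex of `M` has a pure minimal
free resolution), then `M` is chained. -/
theorem statement19 {n k : ℕ} (M : MatroidRk n) (hrk : M.r Finset.univ + k = n)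
    (hpure : ∀ i : ℕ, 1 ≤ i → i ≤ k →
      ∀ X Y : Finset (Fin n), M.Nmin i X → M.Nmin i Y → X.card = Y.card) :
    M.Chained k := by
  have hk : M.nul Finset.univ = k := by
    unfold nul
    rw [Finset.card_univ, Fintype.card_fin]
    omega
  obtain ⟨σ, hmono, -, hN⟩ := M.exists_chain k _ hk
  refine ⟨fun i => σ (i + 1), fun a b hab => hmono (Nat.succ_le_succ hab), fun i => ?_⟩
  have hi := hN (i + 1) i.2
  refine ⟨hi, ?_⟩
  have hmem : M.dW ((i : ℕ) + 1) ∈ {c | ∃ X, M.nul X = (i : ℕ) + 1 ∧ X.card = c} :=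
    Nat.sInf_mem ⟨_, σ (i + 1), hi.1, rfl⟩
  obtain ⟨X, hX, hc⟩ := hmem
  rw [← hc]
  refine hpure _ (by omega) i.2 _ _ hi ⟨hX, fun Y hY h => ?_⟩
  refine Finset.eq_of_subset_of_card_le hY ?_
  rw [hc]
  exact Nat.sInf_le ⟨Y, h, rfl⟩
end
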